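/- arXiv:1804.03484 — 2 statements merged into one kernel-verified Lean document; each statement's English description precedes it below -/
import Mathlib

section
/- Let Q_{E8} ∈ ℤ[X] be the quotient of (1−X^4)·(1−X^{16})·(1−X^{24})·(1−X^{28})·(1−X^{36})·(1−X^{40})·(1−X^{48})·(1−X^{60}) by (1−X^4)·(1−X^8)·(1−X^{12})·(1−X^{16})^2·(1−X^{20})·(1−X^{24})·(1−X^{28}). Then for every natural number n that is not divisible by 4, the coefficient of X^n in Q_{E8} is 0. -/
open Polynomial

theorem one_sub_X_pow_ne (k : ℕ) (hk : k ≠ 0) : (1 - X ^ k : ℤ[X]) ≠ 0 := by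
  intro h
  have := congrArg (Polynomial.eval 0) h
  simp [hk] at this

theorem stmt8 (Q : ℤ[X])
    (hQ : ((1 - X ^ 4) * (1 - X ^ 16) * (1 - X ^ 24) * (1 - X ^ 28) * (1 - X ^ 36) *
        (1 - X ^ 40) * (1 - X ^ 48) * (1 - X ^ 60) : ℤ[X]) =
      (1 - X ^ 4) * (1 - X ^ 8) * (1 - X ^ 12) * (1 - X ^ 16) ^ 2 * (1 - X ^ 20) *
        (1 - X ^ 24) * (1 - X ^ 28) * Q) :
    ∀ n : ℕ, ¬ (4 ∣ n) → Q.coeff n = 0 := by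
  have h36 : (1 - X ^ 36 : ℤ[X]) = (1 - X ^ 12) * (1 + X ^ 12 + X ^ 24) := by ring
  have h40 : (1 - X ^ 40 : ℤ[X]) =
      (1 - X ^ 8) * (1 + X ^ 8 + X ^ 16 + X ^ 24 + X ^ 32) := by ring
  have h48 : (1 - X ^ 48 : ℤ[X]) = (1 - X ^ 16) * (1 + X ^ 16 + X ^ 32) := by ring
  have h60 : (1 - X ^ 60 : ℤ[X]) = (1 - X ^ 20) * (1 + X ^ 20 + X ^ 40) := by ring
  have hne : ((1 - X ^ 4) * (1 - X ^ 8) * (1 - X ^ 12) * (1 - X ^ 16) ^ 2 * (1 - X ^ 20) *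
        (1 - X ^ 24) * (1 - X ^ 28) : ℤ[X]) ≠ 0 := by
    simp only [ne_eq, mul_eq_zero, pow_eq_zero_iff, OfNat.ofNat_ne_zero, not_false_eq_true,
      one_sub_X_pow_ne, or_self, one_sub_X_pow_ne _ (OfNat.ofNat_ne_zero _)]
  have key : Q = expand ℤ 4 ((1 + X ^ 3 + X ^ 6) * (1 + X ^ 2 + X ^ 4 + X ^ 6 + X ^ 8) *
      (1 + X ^ 4 + X ^ 8) * (1 + X ^ 5 + X ^ 10)) := by
    apply mul_left_cancel₀ hne
    rw [← hQ, h36, h40, h48, h60]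
    simp only [map_mul, map_add, map_one, map_pow, expand_X, ← pow_mul]
    norm_num only
    generalize (1 - X ^ 4 : ℤ[X]) = a1
    generalize (1 - X ^ 8 : ℤ[X]) = a2
    generalize (1 - X ^ 12 : ℤ[X]) = a3
    generalize (1 - X ^ 16 : ℤ[X]) = a4
    generalize (1 - X ^ 20 : ℤ[X]) = a5
    generalize (1 - X ^ 24 : ℤ[X]) = a6
    generalize (1 - X ^ 28 : ℤ[X]) = a7
    generalize (1 + X ^ 12 + X ^ 24 : ℤ[X]) = b1
    generalize (1 + X ^ 8 + X ^ 16 + X ^ 24 + X ^ 32 : ℤ[X]) = b2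
    generalize (1 + X ^ 16 + X ^ 32 : ℤ[X]) = b3
    generalize (1 + X ^ 20 + X ^ 40 : ℤ[X]) = b4
    ring
  intro n hn
  rw [key, coeff_expand (by norm_num), if_neg hn]
end

section
/- Let Q_{E8} ∈ ℤ[X] be the quotient of (1−X^4)·(1−X^{16})·(1−X^{24})·(1−X^{28})·(1−X^{36})·(1−X^{40})·(1−X^{48})·(1−X^{60}) by (1−X^4)·(1−X^8)·(1−X^{12})·(1−X^{16})^2·(1−X^{20})·(1−X^{24})·(1−X^{28}). Then the coefficient of X^d in Q_{E8} is 0 for every d in the set {4, 7, 10, 11, 14, 18, 19, 21, 22, 23, 25, 27, 29, 30, 38}. -/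
open Polynomial

lemma aux_ne (n : ℕ) (hn : n ≠ 0) : (1 - X ^ n : ℤ[X]) ≠ 0 := by
  intro h
  have := congrArg (eval 0) h
  simp [hn] at this

theorem stmt11 (Q : ℤ[X])
    (hQ : ((1 - X ^ 4) * (1 - X ^ 16) * (1 - X ^ 24) * (1 - X ^ 28) * (1 - X ^ 36) *
        (1 - X ^ 40) * (1 - X ^ 48) * (1 - X ^ 60) : ℤ[X]) =
      (1 - X ^ 4) * (1 - X ^ 8) * (1 - X ^ 12) * (1 - X ^ 16) ^ 2 * (1 - X ^ 20) *
        (1 - X ^ 24) * (1 - X ^ 28) * Q) :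
    ∀ d ∈ ({4, 7, 10, 11, 14, 18, 19, 21, 22, 23, 25, 27, 29, 30, 38} : Finset ℕ), Q.coeff d = 0 := by
  obtain ⟨P, hP⟩ : ∃ P : ℤ[X], P = (1 + X ^ 3 + X ^ 6) * (1 + X ^ 2 + X ^ 4 + X ^ 6 + X ^ 8) *
    (1 + X ^ 4 + X ^ 8) * (1 + X ^ 5 + X ^ 10) := ⟨_, rfl⟩
  have hE : expand ℤ 4 P = (1 + X ^ 12 + X ^ 24) * (1 + X ^ 8 + X ^ 16 + X ^ 24 + X ^ 32) *
    (1 + X ^ 16 + X ^ 32) * (1 + X ^ 20 + X ^ 40) := by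
    rw [hP]
    simp only [map_mul, map_add, map_one, map_pow, expand_X, ← pow_mul]
  have hne : ((1 - X ^ 4) * (1 - X ^ 8) * (1 - X ^ 12) * (1 - X ^ 16) ^ 2 * (1 - X ^ 20) *
        (1 - X ^ 24) * (1 - X ^ 28) : ℤ[X]) ≠ 0 := by
    simp only [ne_eq, mul_eq_zero, pow_eq_zero_iff, not_or, OfNat.ofNat_ne_zero,
      not_false_eq_true]
    refine ⟨⟨⟨⟨⟨⟨?_, ?_⟩, ?_⟩, ?_⟩, ?_⟩, ?_⟩, ?_⟩ <;> exact aux_ne _ (by norm_num)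
  have hQE : Q = expand ℤ 4 P := by
    apply mul_left_cancel₀ hne
    rw [← hQ, hE]
    have e1 : (1 - X ^ 36 : ℤ[X]) = (1 - X ^ 12) * (1 + X ^ 12 + X ^ 24) := by ring
    have e2 : (1 - X ^ 40 : ℤ[X]) = (1 - X ^ 8) * (1 + X ^ 8 + X ^ 16 + X ^ 24 + X ^ 32) := by ring
    have e3 : (1 - X ^ 48 : ℤ[X]) = (1 - X ^ 16) * (1 + X ^ 16 + X ^ 32) := by ring
    have e4 : (1 - X ^ 60 : ℤ[X]) = (1 - X ^ 20) * (1 + X ^ 20 + X ^ 40) := by ring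
    rw [e1, e2, e3, e4]
    generalize (1 + X ^ 12 + X ^ 24 : ℤ[X]) = a
    generalize (1 + X ^ 8 + X ^ 16 + X ^ 24 + X ^ 32 : ℤ[X]) = b
    generalize (1 + X ^ 16 + X ^ 32 : ℤ[X]) = c
    generalize (1 + X ^ 20 + X ^ 40 : ℤ[X]) = d
    generalize (1 - X ^ 4 : ℤ[X]) = x1
    generalize (1 - X ^ 8 : ℤ[X]) = x2
    generalize (1 - X ^ 12 : ℤ[X]) = x3
    generalize (1 - X ^ 16 : ℤ[X]) = x4
    generalize (1 - X ^ 20 : ℤ[X]) = x5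
    generalize (1 - X ^ 24 : ℤ[X]) = x6
    generalize (1 - X ^ 28 : ℤ[X]) = x7
    ring
  have h1 : P.coeff 1 = 0 := by
    have h := coeff_derivative P 0
    rw [coeff_zero_eq_eval_zero, hP] at h
    rw [hP]
    simpa [derivative_mul] using h.symm
  intro d hd
  rw [hQE, coeff_expand (by norm_num)]
  split_ifs with h
  · have : d = 4 := by
      simp only [Finset.mem_insert, Finset.mem_singleton] at hd
      omega
    subst this
    exact h1
  · rfl
end
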